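/- The kernel of M̃ is exactly the two-dimensional subspace spanned by v₁ = (1,1,0,0) and v₂ = (−1,1,1,1); in particular, the eigenvalue 0 of M̃ has geometric multiplicity 2, so M̃ has no generalised eigenvector for the eigenvalue 0. -/

import Mathlib

/-!
`M̃` has a full-rank factorization `M̃ = B C` through `K²` for which `C B` is invertible.
Multiplying `B C v = 0` by `C` gives `(C B) C v = 0`, hence `C v = 0`, so `ker M̃ = ker C`.
Likewise `M̃² v = 0` gives `(C B)² C v = 0`, and again `C v = 0`.
-/

open Matrix

section FullRankFactorization

variable {m n R : Type*} [Fintype m] [Fintype n] [DecidableEq m] [Semiring R]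
  {B : Matrix n m R} {C : Matrix m n R}

theorem mulVec_mul_mulVec_eq_zero_iff (hCB : IsUnit (C * B)) {v : n → R} :
    C *ᵥ ((B * C) *ᵥ v) = 0 ↔ C *ᵥ v = 0 := by
  have assoc : C *ᵥ ((B * C) *ᵥ v) = (C * B) *ᵥ (C *ᵥ v) := by
    simp only [mulVec_mulVec, Matrix.mul_assoc]
  rw [assoc, (mulVec_injective_of_isUnit hCB).eq_iff' (mulVec_zero _)]

theorem mul_mulVec_eq_zero_iff (hCB : IsUnit (C * B)) {v : n → R} :
    (B * C) *ᵥ v = 0 ↔ C *ᵥ v = 0 := by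
  constructor
  · intro h
    rw [← mulVec_mul_mulVec_eq_zero_iff hCB, h, mulVec_zero]
  · intro h
    rw [← mulVec_mulVec, h, mulVec_zero]

theorem mul_mulVec_mul_mulVec_eq_zero_iff (hCB : IsUnit (C * B)) {v : n → R} :
    (B * C) *ᵥ ((B * C) *ᵥ v) = 0 ↔ (B * C) *ᵥ v = 0 := by
  rw [mul_mulVec_eq_zero_iff hCB, mulVec_mul_mulVec_eq_zero_iff hCB, mul_mulVec_eq_zero_iff hCB]

end FullRankFactorization

theorem finrank_span_pair {R M : Type*} [Semiring R] [StrongRankCondition R] [AddCommMonoid M]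
    [Module R M] {x y : M} (h : LinearIndependent R ![x, y]) :
    Module.finrank R (Submodule.span R {x, y}) = 2 := by
  have : Nontrivial R := nontrivial_of_invariantBasisNumber R
  rw [← range_cons_cons_empty x y ![], finrank_span_eq_card h, Fintype.card_fin]

/-- The matrix `M̃`, the linear part at `ε = 0` of the embedded spatial dynamical system of the heat
exchanger, over any field; if `6 = 0` in `K`, the entries `1 / 6` have the junk value `0`. -/
def heatExchangerMatrix (K : Type*) [Field K] : Matrix (Fin 4) (Fin 4) K :=
  !![0, 0, 1, -1;
     0, 0, -1, 1;
     1/6, -1/6, -1/6, 1/2;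
     -1/6, 1/6, -1/2, 1/6]

namespace heatExchangerMatrix

section Kernel

variable (R : Type*) [Ring R]

/-- The right factor `C` of the full-rank factorization `M̃ = B C`; its rows are the two equations
`v 2 = v 3` and `v 0 + 2 * v 3 = v 1` of the kernel. -/
def rightFactor : Matrix (Fin 2) (Fin 4) R :=
  !![0, 0, 1, -1;
     1, -1, 0, 2]

/-- The first basis vector `v₁` of the kernel of `M̃`. -/
def kerVec₁ : Fin 4 → R := ![1, 1, 0, 0]

/-- The second basis vector `v₂` of the kernel of `M̃`. -/
def kerVec₂ : Fin 4 → R := ![-1, 1, 1, 1]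

theorem linearIndependent_kerVec : LinearIndependent R ![kerVec₁ R, kerVec₂ R] := by
  refine LinearIndependent.pair_iff.mpr fun c d h ↦ ?_
  have hd : d = 0 := by simpa [kerVec₁, kerVec₂] using congrFun h 2
  have hc : c = 0 := by simpa [kerVec₁, kerVec₂, hd] using congrFun h 0
  exact ⟨hc, hd⟩

end Kernel

section CommRing

variable {R : Type*} [CommRing R]

theorem rightFactor_mulVec (v : Fin 4 → R) :
    rightFactor R *ᵥ v = ![v 2 - v 3, v 0 - v 1 + 2 * v 3] := by
  ext i
  fin_cases i <;> simp [rightFactor, mulVec, dotProduct, Fin.sum_univ_four, sub_eq_add_neg]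

theorem smul_kerVec_add_smul_kerVec (c d : R) :
    c • kerVec₁ R + d • kerVec₂ R = ![c - d, c + d, d, d] := by
  simp [kerVec₁, kerVec₂, sub_eq_add_neg]

theorem ker_rightFactor :
    LinearMap.ker (rightFactor R).mulVecLin = Submodule.span R {kerVec₁ R, kerVec₂ R} := by
  ext v
  simp only [LinearMap.mem_ker, mulVecLin_apply, rightFactor_mulVec, Submodule.mem_span_pair,
    smul_kerVec_add_smul_kerVec]
  constructor
  · intro h
    have h₂₃ : v 2 - v 3 = 0 := congrFun h 0
    have h₀₁ : v 0 - v 1 + 2 * v 3 = 0 := congrFun h 1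
    refine ⟨v 0 + v 3, v 3, ?_⟩
    ext i
    fin_cases i
    · exact add_sub_cancel_right (v 0) (v 3)
    · change v 0 + v 3 + v 3 = v 1
      linear_combination h₀₁
    · exact (sub_eq_zero.mp h₂₃).symm
    · rfl
  · rintro ⟨c, d, rfl⟩
    have h₀₁ : c - d - (c + d) + 2 * d = 0 := by ring
    simp [h₀₁]

end CommRing

section Field

variable (K : Type*) [Field K]

/-- The left factor `B` of the full-rank factorization `M̃ = B C`; its rows are the coordinates of
the rows of `M̃` with respect to those of `C`. -/
def leftFactor : Matrix (Fin 4) (Fin 2) K :=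
  !![1, 0;
     -1, 0;
     -1/6, 1/6;
     -1/2, -1/6]

variable {K}

theorem two_ne_zero_and_three_ne_zero (h6 : (6 : K) ≠ 0) : (2 : K) ≠ 0 ∧ (3 : K) ≠ 0 := by
  rwa [← mul_ne_zero_iff, show (2 * 3 : K) = 6 by norm_num]

theorem eq_leftFactor_mul_rightFactor (h6 : (6 : K) ≠ 0) :
    heatExchangerMatrix K = leftFactor K * rightFactor K := by
  have h2 : (2 : K) ≠ 0 := (two_ne_zero_and_three_ne_zero h6).1
  ext i j
  fin_cases i <;> fin_cases j <;> simp [heatExchangerMatrix, leftFactor, rightFactor] <;>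
    field_simp <;> norm_num

theorem rightFactor_mul_leftFactor (h6 : (6 : K) ≠ 0) :
    rightFactor K * leftFactor K = !![1/3, 1/3; 1, -1/3] := by
  obtain ⟨h2, h3⟩ := two_ne_zero_and_three_ne_zero h6
  ext i j
  fin_cases i <;> fin_cases j <;> simp [leftFactor, rightFactor] <;> field_simp <;> norm_num

theorem isUnit_rightFactor_mul_leftFactor (h6 : (6 : K) ≠ 0) :
    IsUnit (rightFactor K * leftFactor K) := by
  obtain ⟨h2, h3⟩ := two_ne_zero_and_three_ne_zero h6
  have det_eq : (rightFactor K * leftFactor K).det = -(2 / 3) ^ 2 := by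
    rw [rightFactor_mul_leftFactor h6, det_fin_two_of]
    field_simp
    norm_num
  rw [isUnit_iff_isUnit_det, det_eq, isUnit_iff_ne_zero]
  exact neg_ne_zero.mpr (pow_ne_zero 2 (div_ne_zero h2 h3))

theorem ker_eq_span_kerVec (h6 : (6 : K) ≠ 0) :
    LinearMap.ker (heatExchangerMatrix K).mulVecLin = Submodule.span K {kerVec₁ K, kerVec₂ K} := by
  rw [← ker_rightFactor, eq_leftFactor_mul_rightFactor h6]
  ext v
  exact mul_mulVec_eq_zero_iff (isUnit_rightFactor_mul_leftFactor h6)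

end Field

end heatExchangerMatrix

open heatExchangerMatrix in
theorem kernel_of_Mt_general {K : Type*} [Field K] (h6 : (6 : K) ≠ 0) :
    (∀ v : Fin 4 → K,
      heatExchangerMatrix K *ᵥ v = 0 ↔ ∃ c d : K, v = c • kerVec₁ K + d • kerVec₂ K) ∧
    Module.finrank K (LinearMap.ker (heatExchangerMatrix K).mulVecLin) = 2 ∧
    (∀ v : Fin 4 → K, heatExchangerMatrix K *ᵥ (heatExchangerMatrix K *ᵥ v) = 0 →
      heatExchangerMatrix K *ᵥ v = 0) := by
  refine ⟨fun v ↦ ?_, ?_, fun v ↦ ?_⟩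
  · rw [← mulVecLin_apply, ← LinearMap.mem_ker, ker_eq_span_kerVec h6, Submodule.mem_span_pair]
    simp only [eq_comm]
  · rw [ker_eq_span_kerVec h6, finrank_span_pair (linearIndependent_kerVec K)]
  · rw [eq_leftFactor_mul_rightFactor h6]
    exact (mul_mulVec_mul_mulVec_eq_zero_iff (isUnit_rightFactor_mul_leftFactor h6)).mp

/-- The kernel of `M̃` is exactly the two-dimensional subspace spanned by
`v₁ = (1,1,0,0)` and `v₂ = (−1,1,1,1)`; in particular the eigenvalue `0` of `M̃`
has geometric multiplicity `2`, and `M̃` has no generalised eigenvector for the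
eigenvalue `0` (every `v` with `M̃² v = 0` already satisfies `M̃ v = 0`). -/
theorem kernel_of_Mt :
    let Mt : Matrix (Fin 4) (Fin 4) ℝ :=
      !![0, 0, 1, -1;
         0, 0, -1, 1;
         1/6, -1/6, -1/6, 1/2;
         -1/6, 1/6, -1/2, 1/6]
    let v₁ : Fin 4 → ℝ := ![1, 1, 0, 0]
    let v₂ : Fin 4 → ℝ := ![-1, 1, 1, 1]
    (∀ v : Fin 4 → ℝ, Mt.mulVec v = 0 ↔ ∃ c d : ℝ, v = c • v₁ + d • v₂) ∧
    Module.finrank ℝ (LinearMap.ker Mt.mulVecLin) = 2 ∧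
    (∀ v : Fin 4 → ℝ, Mt.mulVec (Mt.mulVec v) = 0 → Mt.mulVec v = 0) :=
  kernel_of_Mt_general (by norm_num)
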